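/- There is no tile assembly system in the abstract Tile Assembly Model that finitely self-assembles the U fractal 𝐔. That is, for every aTAM tile assembly system 𝒯 = (T, σ, τ) with finite tile set T, finite τ-stable seed σ, and temperature τ, it is not the case that every finite producible assembly of 𝒯 can be extended by single-tile attachments to an assembly whose domain is exactly 𝐔. -/

import Mathlib

/-- A point of the integer lattice `ℤ²`. -/
abbrev Pt := ℤ × ℤ

/-- The generator of the U fractal. -/
def GU : Set Pt := {(0,0),(0,1),(0,2),(1,0),(2,0),(2,1),(2,2)}

/-- `scaleAddU k A B = A + k·B` (componentwise). -/
def scaleAddU (k : ℤ) (A B : Set Pt) : Set Pt :=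
  {q | ∃ p ∈ A, ∃ g ∈ B, q = (p.1 + k * g.1, p.2 + k * g.2)}

/-- The stages of the U fractal: `ustage 1 = GU` and
`ustage (i+1) = ustage i + 3^i · GU` for `i ≥ 1`. -/
def ustage : ℕ → Set Pt
  | 0 => ∅
  | 1 => GU
  | n + 2 => scaleAddU (3 ^ (n + 1)) (ustage (n + 1)) GU

/-- The U fractal `𝐔 = ⋃_{i ≥ 1} u_i`. -/
def UFractal : Set Pt := {p | ∃ i : ℕ, 1 ≤ i ∧ p ∈ ustage i}

/-- A tile type: a glue (label, drawn from `ℕ`) on each of its four sides.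
The strength of a glue label is given by a strength function. -/
structure TileType where
  north : ℕ
  east : ℕ
  south : ℕ
  west : ℕ
deriving DecidableEq

/-- An assembly: a partial function from `ℤ²` to tile types. -/
abbrev Assembly := Pt → Option TileType

/-- The domain of an assembly. -/
def adom (α : Assembly) : Set Pt := {p | α p ≠ none}

/-- The strength of the bond between the tiles of `α` at positions `p` and `q`
(zero unless `q` is adjacent to `p`, both are tiled, and the abutting glues match). -/
def bond (s : ℕ → ℕ) (α : Assembly) (p q : Pt) : ℕ :=
  match α p, α q with
  | some t, some t' =>
      if q = (p.1 + 1, p.2) then (if t.east = t'.west then s t.east else 0)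
      else if q = (p.1 - 1, p.2) then (if t.west = t'.east then s t.west else 0)
      else if q = (p.1, p.2 + 1) then (if t.north = t'.south then s t.north else 0)
      else if q = (p.1, p.2 - 1) then (if t.south = t'.north then s t.south else 0)
      else 0
  | _, _ => 0

/-- `α` is `τ`-stable: every cut of its binding graph has total glue strength at
least `τ` (witnessed by finitely many bonds crossing the cut). -/
def IsStable (s : ℕ → ℕ) (τ : ℕ) (α : Assembly) : Prop :=
  ∀ A B : Set Pt, A ∪ B = adom α → Disjoint A B → A.Nonempty → B.Nonempty →
    ∃ F : Finset (Pt × Pt), (∀ e ∈ F, e.1 ∈ A ∧ e.2 ∈ B) ∧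
      τ ≤ ∑ e ∈ F, bond s α e.1 e.2

/-- The total strength with which a tile of type `t` placed at the empty position `p`
would bind to its already-placed neighbors in `α`. -/
def attachStrength (s : ℕ → ℕ) (α : Assembly) (p : Pt) (t : TileType) : ℕ :=
  (match α (p.1 + 1, p.2) with
    | some t' => if t.east = t'.west then s t.east else 0
    | none => 0) +
  (match α (p.1 - 1, p.2) with
    | some t' => if t.west = t'.east then s t.west else 0
    | none => 0) +
  (match α (p.1, p.2 + 1) with
    | some t' => if t.north = t'.south then s t.north else 0
    | none => 0) +
  (match α (p.1, p.2 - 1) with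
    | some t' => if t.south = t'.north then s t.south else 0
    | none => 0)

/-- An aTAM tile assembly system `𝒯 = (T, σ, τ)`: a glue strength function, a finite
tile set, a finite `τ`-stable seed assembly, and a temperature `τ`. -/
structure TAS where
  strength : ℕ → ℕ
  tiles : Finset TileType
  seed : Assembly
  temp : ℕ
  seed_finite : (adom seed).Finite
  seed_tiles : ∀ p t, seed p = some t → t ∈ tiles
  seed_stable : IsStable strength temp seed

/-- A single-tile attachment step: a tile of the system attaches at an empty
position with total binding strength at least the temperature. -/
def Step (S : TAS) (α β : Assembly) : Prop :=
  ∃ p t, t ∈ S.tiles ∧ α p = none ∧ S.temp ≤ attachStrength S.strength α p t ∧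
    β = Function.update α p (some t)

/-- `β` is the result of a (finite or infinite) sequence of single-tile attachment
steps starting from `α`. -/
def ReachesFrom (S : TAS) (α β : Assembly) : Prop :=
  ∃ c : ℕ → Assembly, c 0 = α ∧ (∀ n, c (n + 1) = c n ∨ Step S (c n) (c (n + 1))) ∧
    (∀ p n t, c n p = some t → β p = some t) ∧
    (∀ p t, β p = some t → ∃ n, c n p = some t)

/-- A producible assembly: the result of a (finite or infinite) sequence of
single-tile attachment steps starting from the seed. -/
def Producible (S : TAS) (α : Assembly) : Prop := ReachesFrom S S.seed α

/-- A terminal assembly: no tile can attach to it. -/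
def Terminal (S : TAS) (α : Assembly) : Prop := ∀ β, ¬ Step S α β

/-- `S` finitely self-assembles `X` if every finite producible assembly of `S` can be
extended, by a (finite or infinite) sequence of single-tile attachment steps, to an
assembly whose domain is exactly `X`. -/
def FinitelySelfAssembles (S : TAS) (X : Set Pt) : Prop :=
  ∀ α, Producible S α → (adom α).Finite →
    ∃ β, ReachesFrom S α β ∧ adom β = X

/-- `S` strictly self-assembles `X` if every producible terminal assembly of `S`
has domain exactly `X`. -/
def StrictlySelfAssembles (S : TAS) (X : Set Pt) : Prop :=
  ∀ α, Producible S α → Terminal S α → adom α = X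

/-!
Suppose that `𝐔` is finitely self-assembled. At scale `k`, let `V` be the cell of the bottom row
with ternary expansion `1⋯1`. No fractal cell touches it from above, so its tile is supported by
its left or its right neighbor. On that side, the fractal cells between the column of `V` and the
column `3 ^ k` further away split into three bands, one above the other; each of them is attached
to the far column at a single cell, its rung, and the support of `V` rules out that a band grows
from the near column. Hence each band grows from its rung alone, unless consecutive bands help one
another through their contacts, all of which are deep: far from the rungs.

The middle band has to be covered, so at every scale a single tile `t` on some rung, growing inside
its band alone, escapes: it reaches depth in the middle or the top band, or it makes a tile
attachable just above the bottom band. By the pigeonhole principle two scales share the side, the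
band and `t`. Replaying the growth of one scale at the other puts a tile outside `𝐔`: in the middle
or the top band, the deep growth of the large scale overruns the shallow band of the small one; in
the bottom band, the position above the small band lies, at the large scale, inside the band but
outside the fractal.
-/

/-! ## Ternary digits and the U fractal -/

/-- The `i`-th ternary digit of `x`, counted from the least significant one. -/
def trit (i : ℕ) (x : ℤ) : ℤ := x / 3 ^ i % 3

theorem trit_zero_right (i : ℕ) : trit i 0 = 0 := by
  simp [trit]

theorem trit_add_mul_pow_self {v u : ℤ} {i : ℕ} (hv : 0 ≤ v) (hv' : v < 3 ^ i) :
    trit i (v + 3 ^ i * u) = u % 3 := by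
  rw [trit, Int.add_mul_ediv_left _ _ (by positivity), Int.ediv_eq_zero_of_lt hv hv', zero_add]

theorem trit_eq_zero_of_lt {x : ℤ} {i : ℕ} (hx : 0 ≤ x) (hx' : x < 3 ^ i) : trit i x = 0 := by
  rw [trit, Int.ediv_eq_zero_of_lt hx hx', Int.zero_emod]

theorem trit_add_mul_pow_of_lt {i n : ℕ} (h : i < n) (v u : ℤ) :
    trit i (v + 3 ^ n * u) = trit i v := by
  obtain ⟨d, rfl⟩ := Nat.exists_eq_add_of_lt h
  have split_pow : v + 3 ^ (i + d + 1) * u = v + 3 ^ i * (3 * (3 ^ d * u)) := by ring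
  rw [trit, trit, split_pow, Int.add_mul_ediv_left _ _ (by positivity), Int.add_mul_emod_self_left]

theorem trit_emod_pow_of_lt {i n : ℕ} (h : i < n) (x : ℤ) : trit i (x % 3 ^ n) = trit i x := by
  conv_rhs => rw [← Int.emod_add_mul_ediv x (3 ^ n), trit_add_mul_pow_of_lt h]

theorem trit_eq_ediv_of_lt {x : ℤ} {n : ℕ} (hx : 0 ≤ x) (hx' : x < 3 ^ (n + 1)) :
    trit n x = x / 3 ^ n := by
  have hpos : (0 : ℤ) < 3 ^ n := by positivity
  exact Int.emod_eq_of_lt (Int.ediv_nonneg hx hpos.le)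
    (Int.ediv_lt_of_lt_mul hpos (by rwa [mul_comm, ← pow_succ]))

theorem lt_three_pow_toNat (x : ℤ) : x < 3 ^ x.toNat :=
  calc x ≤ (x.toNat : ℤ) := Int.self_le_toNat x
    _ < 3 ^ x.toNat := by exact_mod_cast Nat.lt_pow_self (by norm_num)

theorem mem_GU_bounds {g : Pt} (hg : g ∈ GU) : (0 ≤ g.1 ∧ g.1 < 3) ∧ 0 ≤ g.2 ∧ g.2 < 3 := by
  rcases hg with rfl | rfl | rfl | rfl | rfl | rfl | rfl <;> decide

theorem mem_ustage_succ_iff (n : ℕ) (p : Pt) :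
    p ∈ ustage (n + 1) ↔ (0 ≤ p.1 ∧ p.1 < 3 ^ (n + 1)) ∧ (0 ≤ p.2 ∧ p.2 < 3 ^ (n + 1)) ∧
      ∀ i ≤ n, (trit i p.1, trit i p.2) ∈ GU := by
  induction n generalizing p with
  | zero =>
    have trit_self {x : ℤ} (hx : 0 ≤ x ∧ x < 3) : trit 0 x = x := by
      simpa using trit_eq_ediv_of_lt (n := 0) hx.1 hx.2
    simp only [ustage, zero_add, pow_one, nonpos_iff_eq_zero, forall_eq]
    constructor
    · intro hp
      obtain ⟨hx, hy⟩ := mem_GU_bounds hp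
      exact ⟨hx, hy, by rwa [trit_self hx, trit_self hy]⟩
    · rintro ⟨hx, hy, hp⟩
      rwa [trit_self hx, trit_self hy] at hp
  | succ n ih =>
    have hpos : (0 : ℤ) < 3 ^ (n + 1) := by positivity
    constructor
    · rintro ⟨q, hq, g, hg, rfl⟩
      obtain ⟨⟨hx, hx'⟩, ⟨hy, hy'⟩, hdigits⟩ := (ih q).1 hq
      obtain ⟨⟨hgx, hgx'⟩, hgy, hgy'⟩ := mem_GU_bounds hg
      have lt_top {v u : ℤ} (hv : v < 3 ^ (n + 1)) (hu : u < 3) :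
          v + 3 ^ (n + 1) * u < 3 ^ (n + 1 + 1) := by
        rw [pow_succ 3 (n + 1)]
        nlinarith
      refine ⟨⟨by positivity, lt_top hx' hgx'⟩, ⟨by positivity, lt_top hy' hgy'⟩, fun i hi => ?_⟩
      rcases Nat.lt_or_eq_of_le hi with hlt | rfl
      · simpa only [trit_add_mul_pow_of_lt hlt] using hdigits i (Nat.le_of_lt_succ hlt)
      · simpa only [trit_add_mul_pow_self hx hx', trit_add_mul_pow_self hy hy',
          Int.emod_eq_of_lt hgx hgx', Int.emod_eq_of_lt hgy hgy'] using hg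
    · rintro ⟨⟨hx, hx'⟩, ⟨hy, hy'⟩, hdigits⟩
      refine ⟨(p.1 % 3 ^ (n + 1), p.2 % 3 ^ (n + 1)), (ih _).2
        ⟨⟨Int.emod_nonneg _ hpos.ne', Int.emod_lt_of_pos _ hpos⟩,
          ⟨Int.emod_nonneg _ hpos.ne', Int.emod_lt_of_pos _ hpos⟩, fun i hi => ?_⟩,
        (p.1 / 3 ^ (n + 1), p.2 / 3 ^ (n + 1)), ?_, ?_⟩
      · simpa only [trit_emod_pow_of_lt (Nat.lt_succ_of_le hi)] using
          hdigits i (hi.trans n.le_succ)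
      · simpa only [trit_eq_ediv_of_lt hx hx', trit_eq_ediv_of_lt hy hy'] using
          hdigits (n + 1) le_rfl
      · simp only [Int.emod_add_mul_ediv]

theorem mem_uFractal_iff (p : Pt) :
    p ∈ UFractal ↔ 0 ≤ p.1 ∧ 0 ≤ p.2 ∧ ∀ i, (trit i p.1, trit i p.2) ∈ GU := by
  constructor
  · rintro ⟨j, hj, hp⟩
    obtain ⟨n, rfl⟩ := Nat.exists_eq_succ_of_ne_zero (Nat.one_le_iff_ne_zero.1 hj)
    obtain ⟨⟨hx, hx'⟩, ⟨hy, hy'⟩, hdigits⟩ := (mem_ustage_succ_iff n p).1 hp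
    refine ⟨hx, hy, fun i => ?_⟩
    rcases le_or_gt i n with hi | hi
    · exact hdigits i hi
    · have hpow : (3 : ℤ) ^ (n + 1) ≤ 3 ^ i := pow_le_pow_right₀ (by norm_num) hi
      rw [trit_eq_zero_of_lt hx (hx'.trans_le hpow), trit_eq_zero_of_lt hy (hy'.trans_le hpow)]
      exact Or.inl rfl
  · rintro ⟨hx, hy, hdigits⟩
    have lt_pow {x : ℤ} (hx : x ≤ p.1 + p.2) : x < 3 ^ ((p.1 + p.2).toNat + 1) :=
      (hx.trans_lt (lt_three_pow_toNat _)).trans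
        (pow_lt_pow_right₀ (by norm_num) (Nat.lt_succ_self _))
    exact ⟨_, Nat.le_add_left 1 _, (mem_ustage_succ_iff (p.1 + p.2).toNat p).2
      ⟨⟨hx, lt_pow (by linarith)⟩, ⟨hy, lt_pow (by linarith)⟩, fun i _ => hdigits i⟩⟩

theorem notMem_uFractal_of_trit {x y : ℤ} {i : ℕ} (hx : trit i x = 1) (hy : trit i y ≠ 0) :
    (x, y) ∉ UFractal := by
  intro h
  have hmem := ((mem_uFractal_iff _).1 h).2.2 i
  simp only [GU, hx, Set.mem_insert_iff, Set.mem_singleton_iff, Prod.mk.injEq] at hmem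
  omega

theorem notMem_uFractal_of_eq {x y u v u' v' : ℤ} (i : ℕ)
    (hx : x = v + 3 ^ i * u) (hv : 0 ≤ v) (hv' : v < 3 ^ i) (hu : u % 3 = 1)
    (hy : y = v' + 3 ^ i * u') (hw : 0 ≤ v') (hw' : v' < 3 ^ i) (hu' : u' % 3 ≠ 0) :
    (x, y) ∉ UFractal := by
  refine notMem_uFractal_of_trit (i := i) ?_ ?_
  · rwa [hx, trit_add_mul_pow_self hv hv']
  · rwa [hy, trit_add_mul_pow_self hw hw']

theorem mk_zero_mem_uFractal {x : ℤ} (hx : 0 ≤ x) : (x, 0) ∈ UFractal := by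
  refine (mem_uFractal_iff _).2 ⟨hx, le_rfl, fun i => ?_⟩
  have h3 : trit i x = 0 ∨ trit i x = 1 ∨ trit i x = 2 := by rw [trit]; omega
  rw [trit_zero_right]
  rcases h3 with h | h | h <;> rw [h] <;> simp [GU]

theorem mk_three_pow_mem_uFractal {x : ℤ} {k : ℕ} (hx : 0 ≤ x) (hk : trit k x ≠ 1) :
    (x, 3 ^ k) ∈ UFractal := by
  refine (mem_uFractal_iff _).2 ⟨hx, by positivity, fun i => ?_⟩
  rcases eq_or_ne i k with rfl | hi
  · have hx2 : trit i x = 0 ∨ trit i x = 2 := by rw [trit] at hk ⊢; omega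
    have hy : trit i (3 ^ i) = 1 := by
      simpa using trit_add_mul_pow_self (u := 1) (i := i) le_rfl (by positivity)
    rcases hx2 with h | h <;> rw [h, hy] <;> simp [GU]
  · have hy : trit i (3 ^ k) = 0 := by
      rcases lt_or_gt_of_ne hi with hi | hi
      · simpa [trit_zero_right] using trit_add_mul_pow_of_lt hi 0 1
      · exact trit_eq_zero_of_lt (by positivity) (pow_lt_pow_right₀ (by norm_num) hi)
    rw [hy, ← trit_zero_right i]
    exact ((mem_uFractal_iff _).1 (mk_zero_mem_uFractal hx)).2.2 i

/-- The number whose ternary expansion consists of `k` ones. -/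
def repunit (k : ℕ) : ℤ := ∑ i ∈ Finset.range k, 3 ^ i

theorem three_pow_eq (k : ℕ) : (3 : ℤ) ^ k = 2 * repunit k + 1 := by
  have := geom_sum_mul (3 : ℤ) k
  rw [repunit]
  linarith

theorem repunit_add (i d : ℕ) : repunit (i + d) = repunit i + 3 ^ i * repunit d := by
  simp only [repunit, Finset.sum_range_add, Finset.mul_sum, pow_add]

theorem repunit_succ (k : ℕ) : repunit (k + 1) = 3 * repunit k + 1 := by
  rw [repunit, geom_sum_succ, repunit]

theorem repunit_strictMono : StrictMono repunit :=
  strictMono_nat_of_lt_succ fun k => by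
    rw [repunit, repunit, Finset.sum_range_succ]
    exact lt_add_of_pos_right _ (by positivity)

theorem repunit_nonneg (k : ℕ) : 0 ≤ repunit k :=
  Finset.sum_nonneg fun _ _ => by positivity

theorem three_pow_dvd_of_mem_uFractal {j : ℕ} {q y : ℤ}
    (h : (repunit j + 3 ^ j * q, y) ∈ UFractal) : 3 ^ j ∣ y := by
  induction j generalizing q with
  | zero => simp
  | succ j ih =>
    have hx : repunit (j + 1) + 3 ^ (j + 1) * q = repunit j + 3 ^ j * (1 + 3 * q) := by
      rw [repunit, Finset.sum_range_succ, ← repunit]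
      ring
    rw [hx] at h
    obtain ⟨w, rfl⟩ := ih h
    have hw : w % 3 = 0 := by
      by_contra hw
      have hpow := three_pow_eq j
      have hnonneg := repunit_nonneg j
      exact notMem_uFractal_of_eq j rfl hnonneg (by linarith) (by omega) (zero_add _).symm le_rfl
        (by positivity) hw h
    rw [pow_succ]
    exact mul_dvd_mul_left _ (Int.dvd_of_emod_eq_zero hw)

/-! ## Attachments and assembly sequences -/

/-- The unit steps from a position of `ℤ²` to its four neighbors. -/
def directions : Set Pt := {(1, 0), (-1, 0), (0, 1), (0, -1)}

theorem attachStrength_mono {s : ℕ → ℕ} {α γ : Assembly} {z r : Pt} {t : TileType}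
    (h : ∀ d ∈ directions, ∀ u, α (z + d) = some u → γ (r + d) = some u) :
    attachStrength s α z t ≤ attachStrength s γ r t := by
  have match_mono (f : TileType → ℕ) {a b : Option TileType} : (∀ u, a = some u → b = some u) →
      (match a with | some u => f u | none => 0) ≤ (match b with | some u => f u | none => 0) := by
    intro hab
    cases a with
    | none => exact Nat.zero_le _
    | some u => rw [hab u rfl]
  refine add_le_add (add_le_add (add_le_add (match_mono _ ?_) (match_mono _ ?_))
    (match_mono _ ?_)) (match_mono _ ?_)
  · simpa [Prod.add_def] using h (1, 0) (by simp [directions])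
  · simpa [Prod.add_def, ← sub_eq_add_neg] using h (-1, 0) (by simp [directions])
  · simpa [Prod.add_def] using h (0, 1) (by simp [directions])
  · simpa [Prod.add_def, ← sub_eq_add_neg] using h (0, -1) (by simp [directions])

/-- A tile of type `t` can attach to the assembly `α` at the position `p`. -/
def CanAttach (S : TAS) (α : Assembly) (p : Pt) (t : TileType) : Prop :=
  t ∈ S.tiles ∧ α p = none ∧ S.temp ≤ attachStrength S.strength α p t

section Attachment

variable {S : TAS} {α β γ : Assembly} {X : Set Pt} {p z r : Pt} {t : TileType}

theorem CanAttach.transfer (h : CanAttach S α z t) (hr : γ r = none)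
    (hd : ∀ d ∈ directions, ∀ u, α (z + d) = some u → γ (r + d) = some u) :
    CanAttach S γ r t :=
  ⟨h.1, hr, h.2.2.trans (attachStrength_mono hd)⟩

theorem CanAttach.exists_neighbor (htemp : 0 < S.temp) (h : CanAttach S α p t) :
    ∃ d ∈ directions, α (p + d) ≠ none := by
  by_contra! hempty
  have hle : attachStrength S.strength α p t ≤ attachStrength S.strength (fun _ => none) p t :=
    attachStrength_mono fun d hd u hu => by simp [hempty d hd] at hu
  have hzero : attachStrength S.strength (fun _ => none) p t = 0 := rfl
  exact absurd h.2.2 (by omega)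

theorem update_eq_some_of_canAttach (h : CanAttach S α p t) {q : Pt} {u : TileType}
    (hq : α q = some u) : Function.update α p (some t) q = some u := by
  rwa [Function.update_of_ne]
  rintro rfl
  simp [h.2.1] at hq

/-- A single-tile attachment step at a position of `X`. -/
def StepIn (S : TAS) (X : Set Pt) (α β : Assembly) : Prop :=
  ∃ p ∈ X, ∃ t, CanAttach S α p t ∧ β = Function.update α p (some t)

theorem step_iff : Step S α β ↔ ∃ p t, CanAttach S α p t ∧ β = Function.update α p (some t) := by
  simp only [Step, CanAttach, and_assoc]

theorem Step.mono (h : Step S α β) (hp : α p = some t) : β p = some t := by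
  obtain ⟨q, u, hu, rfl⟩ := step_iff.1 h
  exact update_eq_some_of_canAttach hu hp

/-- An assembly obtained from the seed by finitely many single-tile attachment steps. -/
def Reachable (S : TAS) (α : Assembly) : Prop :=
  Relation.ReflTransGen (Step S) S.seed α

theorem Reachable.attach (h : Reachable S α) (hp : CanAttach S α p t) :
    Reachable S (Function.update α p (some t)) :=
  h.tail (step_iff.2 ⟨p, t, hp, rfl⟩)

theorem adom_update_some (α : Assembly) (p : Pt) (t : TileType) :
    adom (Function.update α p (some t)) = insert p (adom α) := by
  ext q
  rcases eq_or_ne q p with rfl | hq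
  · simp [adom]
  · simp [adom, hq]

theorem reachesFrom_of_reflTransGen (h : Relation.ReflTransGen (Step S) α β) :
    ReachesFrom S α β := by
  induction h using Relation.ReflTransGen.head_induction_on with
  | refl => exact ⟨fun _ => β, rfl, fun _ => Or.inl rfl, fun _ _ _ => id, fun _ _ h => ⟨0, h⟩⟩
  | @head α α' hstep _ ih =>
    obtain ⟨c, rfl, hsteps, hsub, hsup⟩ := ih
    refine ⟨fun | 0 => α | n + 1 => c n, rfl, ?_, ?_, fun p t hp => ?_⟩
    · rintro (_ | n)
      exacts [Or.inr hstep, hsteps n]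
    · rintro p (_ | n) t hp
      exacts [hsub p 0 t (hstep.mono hp), hsub p n t hp]
    · obtain ⟨n, hn⟩ := hsup p t hp
      exact ⟨n + 1, hn⟩

theorem Reachable.finite_adom (h : Reachable S α) : (adom α).Finite := by
  induction h with
  | refl => exact S.seed_finite
  | tail _ hstep ih =>
    obtain ⟨p, t, -, rfl⟩ := step_iff.1 hstep
    rw [adom_update_some]
    exact ih.insert p

theorem Reachable.mem_tiles (h : Reachable S α) (hp : α p = some t) : t ∈ S.tiles := by
  induction h with
  | refl => exact S.seed_tiles p t hp
  | tail _ hstep ih =>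
    obtain ⟨q, u, hu, rfl⟩ := step_iff.1 hstep
    rcases eq_or_ne p q with rfl | hpq
    · rw [Function.update_self, Option.some_inj] at hp
      exact hp ▸ hu.1
    · exact ih (by rwa [Function.update_of_ne hpq] at hp)

end Attachment

/-- The assemblies reachable in finitely many steps never leave `Y`. -/
def ConfinedTo (S : TAS) (Y : Set Pt) : Prop :=
  ∀ α, Reachable S α → adom α ⊆ Y

section Confinement

variable {S : TAS} {Y : Set Pt} {α : Assembly} {p : Pt} {t : TileType}

theorem FinitelySelfAssembles.confinedTo (h : FinitelySelfAssembles S Y) : ConfinedTo S Y := by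
  intro α hα p hp
  obtain ⟨β, ⟨c, rfl, -, hsub, -⟩, rfl⟩ := h α (reachesFrom_of_reflTransGen hα) hα.finite_adom
  obtain ⟨t, ht⟩ := Option.ne_none_iff_exists'.1 hp
  exact Option.ne_none_iff_exists'.2 ⟨t, hsub p 0 t ht⟩

theorem ConfinedTo.mem_of_canAttach (hY : ConfinedTo S Y) (hα : Reachable S α)
    (hp : CanAttach S α p t) : p ∈ Y :=
  hY _ (hα.attach hp) (by rw [adom_update_some]; exact Set.mem_insert p _)

theorem ConfinedTo.temp_pos (hY : ConfinedTo S Y) (hne : Y ≠ Set.univ)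
    (htiles : S.tiles.Nonempty) : 0 < S.temp := by
  obtain ⟨p, hp⟩ := (Set.ne_univ_iff_exists_notMem Y).1 hne
  obtain ⟨t, ht⟩ := htiles
  have hseed : Reachable S S.seed := Relation.ReflTransGen.refl
  by_contra htemp
  refine hp (hY.mem_of_canAttach hseed (t := t) ⟨ht, ?_, by omega⟩)
  by_contra hp'
  exact hp (hY _ hseed hp')

end Confinement

/-- `c` is an assembly sequence of `S` in which a step may also leave the assembly unchanged, as
in `ReachesFrom`. -/
structure IsAssemblySeq (S : TAS) (c : ℕ → Assembly) : Prop where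
  zero : c 0 = S.seed
  succ : ∀ n, c (n + 1) = c n ∨ Step S (c n) (c (n + 1))

namespace IsAssemblySeq

variable {S : TAS} {c : ℕ → Assembly} {m n : ℕ} {p : Pt} {t : TileType}

theorem mono (hc : IsAssemblySeq S c) (hmn : m ≤ n) (hp : c m p = some t) : c n p = some t := by
  induction n, hmn using Nat.le_induction with
  | base => exact hp
  | succ n _ ih =>
    rcases hc.succ n with heq | hstep
    · rwa [heq]
    · exact hstep.mono ih

theorem ne_none_mono (hc : IsAssemblySeq S c) (hmn : m ≤ n) (hp : c m p ≠ none) :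
    c n p ≠ none := by
  obtain ⟨t, ht⟩ := Option.ne_none_iff_exists'.1 hp
  exact Option.ne_none_iff_exists'.2 ⟨t, hc.mono hmn ht⟩

theorem reachable (hc : IsAssemblySeq S c) (n : ℕ) : Reachable S (c n) := by
  induction n with
  | zero => exact hc.zero ▸ Relation.ReflTransGen.refl
  | succ n ih =>
    rcases hc.succ n with heq | hstep
    · rwa [heq]
    · exact ih.tail hstep

theorem exists_canAttach (hc : IsAssemblySeq S c) (hn : c n p = none)
    (hn' : c (n + 1) p ≠ none) :
    ∃ t, CanAttach S (c n) p t ∧ c (n + 1) = Function.update (c n) p (some t) := by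
  rcases hc.succ n with heq | hstep
  · exact absurd (heq ▸ hn) hn'
  · obtain ⟨q, t, ht, heq⟩ := step_iff.1 hstep
    rcases eq_or_ne p q with rfl | hpq
    · exact ⟨t, ht, heq⟩
    · rw [heq, Function.update_of_ne hpq] at hn'
      exact absurd hn hn'

theorem exists_earlier_neighbor (hc : IsAssemblySeq S c) (htemp : 0 < S.temp)
    (hseed : S.seed p = none) (hn : c n p ≠ none) :
    ∃ d ∈ directions, ∀ m, c m p ≠ none → c m (p + d) ≠ none := by
  obtain ⟨i, hi, hi'⟩ := Nat.exists_not_and_succ_of_not_zero_of_exists (p := fun i => c i p ≠ none)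
    (by simpa [hc.zero] using hseed) ⟨n, hn⟩
  obtain ⟨t, ht, -⟩ := hc.exists_canAttach (not_not.1 hi) hi'
  obtain ⟨d, hd, hne⟩ := ht.exists_neighbor htemp
  refine ⟨d, hd, fun m hm => ?_⟩
  rcases le_total m i with hmi | him
  · exact absurd (hc.ne_none_mono hmi hm) hi
  · exact hc.ne_none_mono him hne

end IsAssemblySeq

/-! ## Growth from a single tile -/

/-- The assembly consisting of one tile of type `t`, at the origin. -/
def loneTile (t : TileType) : Assembly := Function.update (fun _ => none) 0 (some t)

/-- The assembly `γ` grows from a single tile of type `t` at the origin by attachments at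
positions of `X`. -/
def GrowsTo (S : TAS) (X : Set Pt) (t : TileType) (γ : Assembly) : Prop :=
  Relation.ReflTransGen (StepIn S X) (loneTile t) γ

/-- Growth inside `X` from a single tile of type `t` at the origin can make a tile attachable
at `z`; the position `z` itself need not belong to `X`. -/
def Supports (S : TAS) (X : Set Pt) (t : TileType) (z : Pt) : Prop :=
  ∃ γ u, GrowsTo S X t γ ∧ CanAttach S γ z u

/-- The assembly `α` overlaid with the translate of `γ` by `ρ`. -/
def overlay (ρ : Pt) (γ α : Assembly) : Assembly := fun p => (γ (p - ρ)).or (α p)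

section Growth

variable {S : TAS} {X B Y : Set Pt} {α γ : Assembly} {ρ r z : Pt} {t u : TileType}

theorem GrowsTo.adom_subset (h : GrowsTo S X t γ) : adom γ ⊆ insert 0 X := by
  induction h with
  | refl =>
    rw [loneTile, adom_update_some]
    exact Set.insert_subset_insert fun p hp => absurd rfl hp
  | tail _ hstep ih =>
    obtain ⟨p, hp, u, -, rfl⟩ := hstep
    rw [adom_update_some]
    exact Set.insert_subset (Or.inr hp) ih

theorem GrowsTo.supports_of_mem_adom (h : GrowsTo S X t γ) (hr : r ∈ adom γ) (hr0 : r ≠ 0) :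
    Supports S X t r := by
  induction h with
  | refl =>
    rw [adom, Set.mem_ofPred_eq, loneTile, Function.update_of_ne hr0] at hr
    exact absurd rfl hr
  | @tail γ _ hgrow hstep ih =>
    obtain ⟨p, -, u, hu, rfl⟩ := hstep
    rw [adom_update_some] at hr
    rcases hr with rfl | hr
    · exact ⟨γ, u, hgrow, hu⟩
    · exact ih hr

theorem GrowsTo.inter_or_exists_exit (h : GrowsTo S X t γ) (B : Set Pt) :
    GrowsTo S (X ∩ B) t γ ∨ ∃ z ∈ X \ B, Supports S (X ∩ B) t z := by
  induction h with
  | refl => exact Or.inl Relation.ReflTransGen.refl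
  | @tail γ _ _ hstep ih =>
    obtain ⟨p, hp, u, hu, rfl⟩ := hstep
    rcases ih with hgrow | hexit
    · by_cases hpB : p ∈ B
      · exact Or.inl (hgrow.tail ⟨p, ⟨hp, hpB⟩, u, hu, rfl⟩)
      · exact Or.inr ⟨p, ⟨hp, hpB⟩, γ, u, hgrow, hu⟩
    · exact Or.inr hexit

theorem Supports.exists_exit (h : Supports S X t z) (hz : z ∈ X \ B) :
    ∃ z' ∈ X \ B, Supports S (X ∩ B) t z' := by
  obtain ⟨γ, u, hgrow, hu⟩ := h
  rcases hgrow.inter_or_exists_exit B with hgrow' | hexit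
  · exact ⟨z, hz, γ, u, hgrow', hu⟩
  · exact hexit

theorem Supports.exists_neighbor (htemp : 0 < S.temp) (h : Supports S X t z) :
    ∃ d ∈ directions, z + d ∈ insert 0 X := by
  obtain ⟨γ, u, hgrow, hu⟩ := h
  obtain ⟨d, hd, hne⟩ := hu.exists_neighbor htemp
  exact ⟨d, hd, hgrow.adom_subset hne⟩

theorem overlay_add (ρ r : Pt) (γ α : Assembly) : overlay ρ γ α (ρ + r) = (γ r).or (α (ρ + r)) := by
  rw [overlay, add_sub_cancel_left]

theorem overlay_update (ρ r : Pt) (γ α : Assembly) (u : TileType) :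
    overlay ρ (Function.update γ r (some u)) α =
      Function.update (overlay ρ γ α) (ρ + r) (some u) := by
  funext p
  obtain ⟨q, rfl⟩ : ∃ q, p = ρ + q := ⟨p - ρ, (add_sub_cancel ρ p).symm⟩
  rcases eq_or_ne q r with rfl | hq
  · simp [overlay_add]
  · simp [overlay_add, hq]

theorem overlay_loneTile (hρ : α ρ = some t) : overlay ρ (loneTile t) α = α := by
  have hempty : overlay ρ (fun _ => none) α = α := by
    funext p
    rw [overlay, Option.none_or]
  rw [loneTile, overlay_update, hempty, add_zero, ← hρ, Function.update_eq_self]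

theorem CanAttach.overlay (h : CanAttach S γ r u) (hr : α (ρ + r) = none) :
    CanAttach S (overlay ρ γ α) (ρ + r) u := by
  refine h.transfer (by rw [overlay_add, h.2.1, hr, Option.or_none]) fun d _ v hv => ?_
  rw [add_assoc, overlay_add, hv, Option.some_or]

theorem GrowsTo.reachable_overlay (h : GrowsTo S X t γ) (hα : Reachable S α)
    (hρ : α ρ = some t) (hX : ∀ r ∈ X, α (ρ + r) = none) : Reachable S (overlay ρ γ α) := by
  induction h with
  | refl => rwa [overlay_loneTile hρ]
  | tail _ hstep ih =>
    obtain ⟨r, hr, u, hu, rfl⟩ := hstep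
    rw [overlay_update]
    exact ih.attach (hu.overlay (hX r hr))

theorem Supports.add_mem (h : Supports S X t z) (hY : ConfinedTo S Y) (hα : Reachable S α)
    (hρ : α ρ = some t) (hX : ∀ r ∈ X, α (ρ + r) = none) : ρ + z ∈ Y := by
  obtain ⟨γ, u, hgrow, hu⟩ := h
  by_cases hz : α (ρ + z) = none
  · exact hY.mem_of_canAttach (hgrow.reachable_overlay hα hρ hX) (hu.overlay hz)
  · exact hY α hα hz

end Growth

/-- At some time of the assembly sequence `c`, a tile of type `t` is present at `ρ` while
`ρ + X` is still empty. -/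
def PlacedBefore (c : ℕ → Assembly) (ρ : Pt) (X : Set Pt) (t : TileType) : Prop :=
  ∃ n, c n ρ = some t ∧ ∀ r ∈ X, c n (ρ + r) = none

open Classical in
/-- The part of the assembly `α` on `ρ` and `ρ + X`, translated by `-ρ`. -/
noncomputable def window (ρ : Pt) (X : Set Pt) (α : Assembly) : Assembly :=
  (insert 0 X).piecewise (fun r => α (ρ + r)) fun _ => none

/-- Up to time `n`, the tiles on `ρ + X` have grown from the tile at `ρ` alone. -/
def GrownFrom (S : TAS) (c : ℕ → Assembly) (ρ : Pt) (X : Set Pt) (n : ℕ) : Prop :=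
  (∀ r ∈ X, c n (ρ + r) = none) ∨
    ∃ t, PlacedBefore c ρ X t ∧ c n ρ = some t ∧ GrowsTo S X t (window ρ X (c n))

section Transplantation

variable {S : TAS} {c : ℕ → Assembly} {X X' Y : Set Pt} {α β : Assembly} {ρ r z : Pt}
  {t u : TileType} {n : ℕ}

theorem PlacedBefore.mem_tiles (h : PlacedBefore c ρ X t) (hc : IsAssemblySeq S c) :
    t ∈ S.tiles := by
  obtain ⟨n, hn, -⟩ := h
  exact (hc.reachable n).mem_tiles hn

theorem PlacedBefore.add_mem_of_supports (h : PlacedBefore c ρ X t) (hc : IsAssemblySeq S c)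
    (hY : ConfinedTo S Y) (hX : ∀ r ∈ X', ρ + r ∈ Y → r ∈ X) (hz : Supports S X' t z) :
    ρ + z ∈ Y := by
  obtain ⟨n, hn, hempty⟩ := h
  refine hz.add_mem hY (hc.reachable n) hn fun r hr => ?_
  by_contra hne
  exact hne (hempty r (hX r hr (hY _ (hc.reachable n) hne)))

theorem window_of_mem (hr : r ∈ insert 0 X) : window ρ X α r = α (ρ + r) :=
  if_pos hr

theorem window_of_notMem (hr : r ∉ insert 0 X) : window ρ X α r = none :=
  if_neg hr

theorem window_congr (hρ : α ρ = β ρ) (h : ∀ r ∈ X, α (ρ + r) = β (ρ + r)) :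
    window ρ X α = window ρ X β := by
  funext r
  by_cases hr : r ∈ insert 0 X
  · rw [window_of_mem hr, window_of_mem hr]
    rcases hr with rfl | hr
    · rw [add_zero, hρ]
    · exact h r hr
  · rw [window_of_notMem hr, window_of_notMem hr]

theorem window_update (hr : r ∈ X) :
    window ρ X (Function.update α (ρ + r) (some u)) =
      Function.update (window ρ X α) r (some u) := by
  funext q
  rcases eq_or_ne q r with rfl | hq
  · rw [window_of_mem (Or.inr hr), Function.update_self, Function.update_self]
  · rw [Function.update_of_ne hq]
    by_cases hqX : q ∈ insert 0 X
    · rw [window_of_mem hqX, window_of_mem hqX, Function.update_of_ne (by simpa using hq)]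
    · rw [window_of_notMem hqX, window_of_notMem hqX]

theorem window_eq_loneTile (hρ : α ρ = some t) (hX : ∀ r ∈ X, α (ρ + r) = none) :
    window ρ X α = loneTile t := by
  funext r
  rcases eq_or_ne r 0 with rfl | hr
  · rw [window_of_mem (Set.mem_insert 0 X), add_zero, hρ, loneTile, Function.update_self]
  · rw [loneTile, Function.update_of_ne hr]
    by_cases hrX : r ∈ X
    · rw [window_of_mem (Or.inr hrX), hX r hrX]
    · rw [window_of_notMem (by simp [hr, hrX])]

theorem CanAttach.window (h : CanAttach S α (ρ + r) u)
    (hd : ∀ d ∈ directions, α (ρ + r + d) ≠ none → r + d ∈ insert 0 X) :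
    CanAttach S (window ρ X α) r u := by
  refine h.transfer ?_ fun d hd' v hv => ?_
  · by_cases hr : r ∈ insert 0 X
    · rw [window_of_mem hr, h.2.1]
    · exact window_of_notMem hr
  · rw [window_of_mem (hd d hd' (by simp [hv])), ← add_assoc, hv]

theorem GrownFrom.exists_growsTo (h : GrownFrom S c ρ X n) (hr : r ∈ X)
    (hne : c n (ρ + r) ≠ none) :
    ∃ t, PlacedBefore c ρ X t ∧ GrowsTo S X t (window ρ X (c n)) := by
  rcases h with hempty | ⟨t, hplaced, -, hgrow⟩
  · exact absurd (hempty r hr) hne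
  · exact ⟨t, hplaced, hgrow⟩

theorem GrownFrom.exists_supports (h : GrownFrom S c ρ X n) (hr : r ∈ X) (hr0 : r ≠ 0)
    (hne : c n (ρ + r) ≠ none) : ∃ t, PlacedBefore c ρ X t ∧ Supports S X t r := by
  obtain ⟨t, hplaced, hgrow⟩ := h.exists_growsTo hr hne
  refine ⟨t, hplaced, hgrow.supports_of_mem_adom ?_ hr0⟩
  rwa [adom, Set.mem_ofPred_eq, window_of_mem (Or.inr hr)]

theorem GrownFrom.exists_supports_of_canAttach (h : GrownFrom S c ρ X n) (hr : r ∈ X)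
    (hne : c n (ρ + r) ≠ none) (hz : CanAttach S (c n) (ρ + z) u)
    (hd : ∀ d ∈ directions, c n (ρ + z + d) ≠ none → z + d ∈ insert 0 X) :
    ∃ t, PlacedBefore c ρ X t ∧ Supports S X t z := by
  obtain ⟨t, hplaced, hgrow⟩ := h.exists_growsTo hr hne
  exact ⟨t, hplaced, _, u, hgrow, hz.window hd⟩

theorem GrownFrom.exists_placedBefore (h : GrownFrom S c ρ X n) (htemp : 0 < S.temp)
    (hr : CanAttach S (c n) (ρ + r) u)
    (hd : ∀ d ∈ directions, c n (ρ + r + d) ≠ none → r + d ∈ insert 0 X) :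
    ∃ t, PlacedBefore c ρ X t ∧ c n ρ = some t ∧ GrowsTo S X t (window ρ X (c n)) := by
  rcases h with hempty | hgrown
  · obtain ⟨d, hd', hne⟩ := hr.exists_neighbor htemp
    have hmem := hd d hd' hne
    rw [add_assoc] at hne
    rcases hmem with hzero | hX
    · rw [hzero, add_zero] at hne
      obtain ⟨t, ht⟩ := Option.ne_none_iff_exists'.1 hne
      refine ⟨t, ⟨n, ht, hempty⟩, ht, ?_⟩
      rw [window_eq_loneTile ht hempty]
      exact Relation.ReflTransGen.refl
    · exact absurd (hempty _ hX) hne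
  · exact hgrown

theorem GrownFrom.succ (h : GrownFrom S c ρ X n) (hc : IsAssemblySeq S c) (htemp : 0 < S.temp)
    (hisolated : ∀ r ∈ X, ∀ u, CanAttach S (c n) (ρ + r) u →
      ∀ d ∈ directions, c n (ρ + r + d) ≠ none → r + d ∈ insert 0 X) :
    GrownFrom S c ρ X (n + 1) := by
  by_cases hnew : ∃ r ∈ X, c n (ρ + r) = none ∧ c (n + 1) (ρ + r) ≠ none
  · obtain ⟨r, hr, hn, hn'⟩ := hnew
    obtain ⟨u, hu, hupdate⟩ := hc.exists_canAttach hn hn'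
    obtain ⟨t, hplaced, ht, hgrow⟩ := h.exists_placedBefore htemp hu (hisolated r hr u hu)
    refine Or.inr ⟨t, hplaced, hc.mono n.le_succ ht, ?_⟩
    rw [hupdate, window_update hr]
    exact hgrow.tail ⟨r, hr, u, hu.window (hisolated r hr u hu), rfl⟩
  · push Not at hnew
    have hsame : ∀ r ∈ X, c (n + 1) (ρ + r) = c n (ρ + r) := by
      intro r hr
      cases hv : c n (ρ + r) with
      | none => exact hnew r hr hv
      | some u => exact hc.mono n.le_succ hv
    rcases h with hempty | ⟨t, hplaced, ht, hgrow⟩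
    · exact Or.inl fun r hr => by rw [hsame r hr, hempty r hr]
    · have ht' := hc.mono n.le_succ ht
      refine Or.inr ⟨t, hplaced, ht', ?_⟩
      rwa [window_congr (ht'.trans ht.symm) hsame]

end Transplantation

/-! ## Rungs and bands -/

/-- The cell `V` of the bottom row, with ternary expansion `11⋯1` (`k + 2` ones); no other cell
of the fractal lies above it up to height `3 ^ (k + 1)`. -/
def pivot (k : ℕ) : Pt := (4 * 3 ^ k + repunit k, 0)

/-- The cell at distance `3 ^ k` from `pivot k`, on the side `e = ±1`, raised by `h * 3 ^ k`:
the only cell of the fractal in its column at the heights of the `h`-th band. -/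
def rung (k : ℕ) (e h : ℤ) : Pt := (4 * 3 ^ k + repunit k + e * 3 ^ k, h * 3 ^ k)

/-- The positions, relative to a rung on the side `e`, strictly between the column of the rung and
the column of the pivot and at most `3 ^ k - 1` above the rung. The number `-e * r.1` is the
horizontal distance of `r` from the rung, called its depth. -/
def box (k : ℕ) (e : ℤ) : Set Pt :=
  {r | 0 < -e * r.1 ∧ -e * r.1 < 3 ^ k ∧ 0 ≤ r.2 ∧ r.2 < 3 ^ k}

/-- The `h`-th band at scale `k` on the side `e`: the cells of the fractal between the columns of
rung and pivot at heights from `h * 3 ^ k` to `(h + 1) * 3 ^ k - 1`, relative to the rung. -/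
def bandCells (k : ℕ) (e h : ℤ) : Set Pt := {r | r ∈ box k e ∧ rung k e h + r ∈ UFractal}

section Geometry

variable {k : ℕ} {e h : ℤ} {r d : Pt}

theorem ne_zero_of_mem_box (hr : r ∈ box k e) : r ≠ 0 := by
  rintro rfl
  simp [box] at hr

theorem notMem_uFractal_of_repunit_lt (he : e = 1 ∨ e = -1) (hh : h = 1 ∨ h = 2)
    (hr : r ∈ box k e) (hdepth : repunit k < -e * r.1) : rung k e h + r ∉ UFractal := by
  obtain ⟨-, hr', hy, hy'⟩ := hr
  have hpow := three_pow_eq k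
  refine notMem_uFractal_of_eq k (v := repunit k + e * 3 ^ k + r.1) (u := 4) (v' := r.2) (u' := h)
    ?_ ?_ ?_ (by norm_num) ?_ hy hy' (by omega)
  · simp only [rung]
    ring
  · rcases he with rfl | rfl <;> linarith
  · rcases he with rfl | rfl <;> linarith
  · simp only [rung]
    ring

theorem repunit_lt_of_mem_top_row (he : e = 1 ∨ e = -1) (hr : r ∈ bandCells (k + 1) e h)
    (htop : r.2 = 3 ^ (k + 1) - 1) : repunit k < -e * r.1 := by
  by_contra! hdepth
  have hpos := hr.1.1
  have hpow := three_pow_eq k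
  refine notMem_uFractal_of_eq k (v := repunit k + r.1) (u := 13 + 3 * e) (v' := 3 ^ k - 1)
    (u' := 3 * h + 2) ?_ ?_ ?_ (by omega) ?_ (by linarith) (by linarith) (by omega) hr.2
  · simp only [rung, repunit, Finset.sum_range_succ]
    ring
  · rcases he with rfl | rfl <;> linarith
  · rcases he with rfl | rfl <;> linarith
  · simp only [rung, htop]
    ring

theorem notMem_uFractal_of_overhang {i : ℕ} (hik : i < k) (he : e = 1 ∨ e = -1)
    (hpos : 0 < -e * r.1) (hdepth : -e * r.1 ≤ repunit i) (hheight : r.2 = 3 ^ i) :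
    rung k e h + r ∉ UFractal := by
  obtain ⟨m, rfl⟩ := Nat.exists_eq_add_of_lt hik
  have hpow := three_pow_eq i
  refine notMem_uFractal_of_eq i (v := repunit i + r.1)
    (u := 3 * ((4 + e) * 3 ^ m + repunit m) + 1) (v' := 0) (u' := 3 * (h * 3 ^ m) + 1)
    ?_ ?_ ?_ (by omega) ?_ le_rfl (by positivity) (by omega)
  · simp only [rung, add_assoc i m 1, repunit_add i (m + 1), repunit_succ m]
    ring
  · rcases he with rfl | rfl <;> linarith
  · rcases he with rfl | rfl <;> linarith
  · simp only [rung, hheight]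
    ring

theorem eq_zero_of_three_pow_dvd {y : ℤ} (hdvd : 3 ^ k ∣ y) (hy : 0 ≤ y) (hy' : y < 3 ^ k) :
    y = 0 :=
  Int.eq_zero_of_abs_lt_dvd hdvd (by rwa [abs_of_nonneg hy])

theorem mem_bandCells_or_eq_pivot (he : e = 1 ∨ e = -1) (hh : h ∈ Set.Icc (0 : ℤ) 2)
    (hx : 0 ≤ -e * r.1) (hx' : -e * r.1 ≤ 3 ^ k) (hy : 0 ≤ r.2) (hy' : r.2 < 3 ^ k)
    (hU : rung k e h + r ∈ UFractal) :
    r ∈ insert 0 (bandCells k e h) ∨ h = 0 ∧ r = (-e * 3 ^ k, 0) := by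
  obtain ⟨x, y⟩ := r
  rcases hx.eq_or_lt with hx0 | hx0
  · have hx0 : x = 0 := by rcases he with rfl | rfl <;> simpa using hx0.symm
    have hcell : rung k e h + (x, y) = (repunit k + 3 ^ k * (4 + e), h * 3 ^ k + y) := by
      simp only [rung, hx0, Prod.mk_add_mk, Prod.mk.injEq, and_true]
      ring
    rw [hcell] at hU
    have hdvd : 3 ^ k ∣ y :=
      (dvd_add_right (Dvd.intro_left h rfl)).1 (three_pow_dvd_of_mem_uFractal hU)
    exact Or.inl (Or.inl (by rw [hx0, eq_zero_of_three_pow_dvd hdvd hy hy', Prod.mk_zero_zero]))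
  · rcases hx'.eq_or_lt with hxk | hxk
    · have hxk : x = -e * 3 ^ k := by rw [← hxk]; rcases he with rfl | rfl <;> simp
      have hcell : rung k e h + (x, y) =
          (repunit (k + 1) + 3 ^ (k + 1) * 1, h * 3 ^ k + y) := by
        simp only [rung, hxk, repunit, Finset.sum_range_succ, Prod.mk_add_mk, Prod.mk.injEq,
          and_true]
        ring
      rw [hcell] at hU
      have hheight := eq_zero_of_three_pow_dvd (three_pow_dvd_of_mem_uFractal hU)
        (by nlinarith [hh.1]) (by rw [pow_succ]; nlinarith [hh.2])
      have hh0 : h = 0 := by nlinarith [hh.1]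
      exact Or.inr ⟨hh0, by rw [hxk, show y = 0 by simpa [hh0] using hheight]⟩
    · exact Or.inl (Or.inr ⟨⟨hx0, hxk, hy, hy'⟩, hU⟩)

theorem notMem_uFractal_above_top_row (he : e = 1 ∨ e = -1) (hr : r ∈ box k e)
    (htop : r.2 = 3 ^ k - 1) : rung k e 2 + r + (0, 1) ∉ UFractal := by
  obtain ⟨hx, hx', -, -⟩ := hr
  have hpow := three_pow_eq k
  refine notMem_uFractal_of_eq (k + 1) (v := (1 + e) * 3 ^ k + repunit k + r.1) (u := 1)
    (v' := 0) (u' := 1) ?_ ?_ ?_ (by norm_num) ?_ le_rfl (by positivity) (by norm_num)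
  · simp only [rung, Prod.fst_add]
    ring
  · rcases he with rfl | rfl <;> linarith
  · rw [pow_succ]
    rcases he with rfl | rfl <;> linarith
  · simp only [rung, Prod.snd_add, htop]
    ring

theorem add_direction_cases (he : e = 1 ∨ e = -1) (hd : d ∈ directions) :
    (-e * r.1 ≤ -e * (r + d).1 + 1 ∧ (r + d).2 = r.2) ∨
      (-e * (r + d).1 = -e * r.1 ∧ r.2 ≤ (r + d).2 + 1) := by
  rcases hd with rfl | rfl | rfl | rfl <;> rcases he with rfl | rfl <;>
    simp <;> omega

theorem depth_le_depth_add_one (he : e = 1 ∨ e = -1) (hd : d ∈ directions) :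
    -e * r.1 ≤ -e * (r + d).1 + 1 := by
  rcases add_direction_cases he hd with ⟨hle, -⟩ | ⟨heq, -⟩
  · exact hle
  · linarith

theorem neighbor_of_mem_box (he : e = 1 ∨ e = -1) (hr : r ∈ box k e) (hd : d ∈ directions) :
    ((0 ≤ -e * (r + d).1 ∧ -e * (r + d).1 ≤ 3 ^ k) ∧ 0 ≤ (r + d).2 ∧ (r + d).2 < 3 ^ k) ∨
      (d = (0, 1) ∧ r.2 = 3 ^ k - 1) ∨ d = (0, -1) ∧ r.2 = 0 := by
  obtain ⟨hx, hx', hy, hy'⟩ := hr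
  simp only [Prod.fst_add, Prod.snd_add]
  rcases hd with rfl | rfl | rfl | rfl
  iterate 2
    exact Or.inl (by rcases he with rfl | rfl <;> simp only [neg_neg, one_mul, neg_mul] at * <;>
      omega)
  · rcases (Int.le_sub_one_of_lt hy').lt_or_eq with hlt | htop
    · exact Or.inl ⟨⟨by simpa using hx.le, by simpa using hx'.le⟩, by omega⟩
    · exact Or.inr (Or.inl ⟨rfl, htop⟩)
  · rcases hy.lt_or_eq with hlt | hbot
    · exact Or.inl ⟨⟨by simpa using hx.le, by simpa using hx'.le⟩, by omega⟩
    · exact Or.inr (Or.inr ⟨rfl, hbot.symm⟩)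

theorem neighbor_of_mem_bandCells (he : e = 1 ∨ e = -1) (hh : h ∈ Set.Icc (0 : ℤ) 2)
    (hr : r ∈ bandCells k e h) (hd : d ∈ directions) (hU : rung k e h + r + d ∈ UFractal) :
    r + d ∈ insert 0 (bandCells k e h) ∨ (h = 0 ∧ r + d = (-e * 3 ^ k, 0)) ∨
      (d = (0, 1) ∧ r.2 = 3 ^ k - 1 ∧ h + 1 ∈ Set.Icc (1 : ℤ) 2) ∨
      (d = (0, -1) ∧ r.2 = 0 ∧ h ∈ Set.Icc (1 : ℤ) 2) := by
  obtain ⟨hh0, hh2⟩ := hh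
  rcases neighbor_of_mem_box he hr.1 hd with ⟨⟨hx, hx'⟩, hy, hy'⟩ | ⟨rfl, htop⟩ | ⟨rfl, hbot⟩
  · rw [add_assoc] at hU
    rcases mem_bandCells_or_eq_pivot he ⟨hh0, hh2⟩ hx hx' hy hy' hU with hmem | hpivot
    exacts [Or.inl hmem, Or.inr (Or.inl hpivot)]
  · have hne : h ≠ 2 := by
      rintro rfl
      exact notMem_uFractal_above_top_row he hr.1 htop hU
    exact Or.inr (Or.inr (Or.inl ⟨rfl, htop, by omega, by omega⟩))
  · have hne : h ≠ 0 := by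
      rintro rfl
      have hnonneg := ((mem_uFractal_iff _).1 hU).2.1
      simp [rung, hbot] at hnonneg
    exact Or.inr (Or.inr (Or.inr ⟨rfl, hbot, by omega, hh2⟩))

theorem rung_add_above_top_row (htop : r.2 = 3 ^ k - 1) :
    rung k e h + r + (0, 1) = rung k e (h + 1) + (r.1, 0) := by
  ext
  · simp [rung]
  · simp only [rung, Prod.snd_add, htop]
    ring

theorem rung_add_below_bottom_row (hbot : r.2 = 0) :
    rung k e (h + 1) + r + (0, -1) = rung k e h + (r.1, 3 ^ k - 1) := by
  ext
  · simp [rung]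
  · simp only [rung, Prod.snd_add, hbot]
    ring

theorem mem_bandCells_below (hr : r ∈ bandCells k e (h + 1)) (hbot : r.2 = 0)
    (hU : rung k e (h + 1) + r + (0, -1) ∈ UFractal) : (r.1, 3 ^ k - 1) ∈ bandCells k e h := by
  rw [rung_add_below_bottom_row hbot] at hU
  obtain ⟨hx, hx', -, -⟩ := hr.1
  exact ⟨⟨hx, hx', by linarith [three_pow_eq k, repunit_nonneg k], by simp⟩, hU⟩

theorem rung_add_eq_pivot (k : ℕ) (e : ℤ) : rung k e 0 + (-e * 3 ^ k, 0) = pivot k := by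
  simp [rung, pivot]

theorem rung_add_eq_pivot_add (he : e = 1 ∨ e = -1) (hr : r ∈ box k e) (hd : d ∈ directions)
    (hrd : r + d = (-e * 3 ^ k, 0)) : rung k e 0 + r = pivot k + (e, 0) := by
  obtain ⟨-, hx, -, -⟩ := hr
  obtain rfl : r = (-e * 3 ^ k, 0) - d := eq_sub_of_add_eq hrd
  rw [← add_sub_assoc, rung_add_eq_pivot, sub_eq_add_neg]
  congr 1
  rcases hd with rfl | rfl | rfl | rfl <;> rcases he with rfl | rfl <;> simp at hx ⊢

theorem three_pow_le_rung_add_fst (he : e = 1 ∨ e = -1) (hr : r ∈ box k e) :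
    3 ^ k ≤ (rung k e h + r).1 := by
  obtain ⟨hx, hx', -, -⟩ := hr
  have hnonneg := repunit_nonneg k
  simp only [rung, Prod.fst_add]
  rcases he with rfl | rfl <;> linarith

theorem pivot_mem_uFractal (k : ℕ) : pivot k ∈ UFractal :=
  mk_zero_mem_uFractal (by linarith [repunit_nonneg k, show (0 : ℤ) < 3 ^ k by positivity])

theorem horizontal_of_pivot_add_mem (hk : k ≠ 0) (hd : d ∈ directions)
    (hU : pivot k + d ∈ UFractal) : ∃ e : ℤ, (e = 1 ∨ e = -1) ∧ d = (e, 0) := by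
  have not_vertical {y : ℤ} (hy : IsUnit y) : pivot k + (0, y) ∉ UFractal := by
    have hcell : pivot k + (0, y) = (repunit k + 3 ^ k * 4, y) := by
      simp only [pivot, Prod.mk_add_mk, Prod.mk.injEq, zero_add, and_true]
      ring
    rw [hcell]
    intro h
    have hunit := isUnit_of_dvd_unit (three_pow_dvd_of_mem_uFractal h) hy
    rw [isUnit_pow_iff hk, Int.isUnit_iff] at hunit
    omega
  rcases hd with rfl | rfl | rfl | rfl
  · exact ⟨1, Or.inl rfl, rfl⟩
  · exact ⟨-1, Or.inr rfl, rfl⟩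
  · exact absurd hU (not_vertical isUnit_one)
  · exact absurd hU (not_vertical isUnit_one.neg)

theorem deep_mem_bandCells (hk : k ≠ 0) (he : e = 1 ∨ e = -1) :
    (-e * repunit k, 0) ∈ bandCells k e 1 := by
  have hpow := three_pow_eq k
  have hpos : 0 < repunit k := repunit_strictMono (Nat.pos_of_ne_zero hk)
  refine ⟨⟨?_, ?_, le_rfl, by positivity⟩, ?_⟩
  · rcases he with rfl | rfl <;> simpa using hpos
  · rcases he with rfl | rfl <;> simp only <;> linarith
  · have hcell : rung k e 1 + (-e * repunit k, 0) =
        ((1 - e) * repunit k + 3 ^ k * (4 + e), 3 ^ k) := by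
      simp only [rung, Prod.mk_add_mk, Prod.mk.injEq]
      constructor <;> ring
    rw [hcell]
    refine mk_three_pow_mem_uFractal ?_ ?_
    · rcases he with rfl | rfl <;> linarith
    · rw [trit_add_mul_pow_self]
      all_goals rcases he with rfl | rfl <;> norm_num <;> linarith

end Geometry

/-! ## Escapes -/

/-- The positions, relative to the rung of the `b`-th band at scale `j + 1`, where growth from that
band interferes with another one: for `b = 0` those just above the band with depth at most
`repunit (j + 1)`; for the other two bands the cells of depth at least `repunit j`. -/
def exitZone (j : ℕ) (e b : ℤ) : Set Pt :=
  if b = 0 then {z | z.2 = 3 ^ (j + 1) ∧ 0 < -e * z.1 ∧ -e * z.1 ≤ repunit (j + 1)}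
  else {z ∈ bandCells (j + 1) e b | repunit j ≤ -e * z.1}

/-- In the assembly sequence `c`, a tile of type `t` is placed on the rung of the `b`-th band at
scale `j + 1` on the side `e` before the band is touched, and growth inside the band from this tile
alone can make a position of the exit zone attachable. -/
structure Escapes (S : TAS) (c : ℕ → Assembly) (j : ℕ) (e b : ℤ) (t : TileType) : Prop where
  side : e = 1 ∨ e = -1
  band_mem : b ∈ Set.Icc (0 : ℤ) 2
  placed : PlacedBefore c (rung (j + 1) e b) (bandCells (j + 1) e b) t
  supports : ∃ z ∈ exitZone j e b, Supports S (bandCells (j + 1) e b) t z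

section Escape

variable {S : TAS} {c : ℕ → Assembly} {i j n : ℕ} {e b h : ℤ} {r d : Pt} {t u : TileType}

theorem exists_escapes_of_deep (he : e = 1 ∨ e = -1) (hh : h ∈ Set.Icc (1 : ℤ) 2)
    (hgrown : GrownFrom S c (rung (j + 1) e h) (bandCells (j + 1) e h) n)
    (hr : r ∈ bandCells (j + 1) e h) (hdeep : repunit j ≤ -e * r.1)
    (hne : c n (rung (j + 1) e h + r) ≠ none) : ∃ t, Escapes S c j e h t := by
  obtain ⟨t, hplaced, hsupports⟩ := hgrown.exists_supports hr (ne_zero_of_mem_box hr.1) hne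
  have hh0 : h ≠ 0 := by linarith [hh.1]
  refine ⟨t, he, ⟨by linarith [hh.1], hh.2⟩, hplaced, r, ?_, hsupports⟩
  rw [exitZone, if_neg hh0]
  exact ⟨hr, hdeep⟩

theorem exists_escapes_of_contact_above (he : e = 1 ∨ e = -1) (hh : h + 1 ∈ Set.Icc (1 : ℤ) 2)
    (hgrown : GrownFrom S c (rung (j + 1) e (h + 1)) (bandCells (j + 1) e (h + 1)) n)
    (hr : r ∈ bandCells (j + 1) e h) (htop : r.2 = 3 ^ (j + 1) - 1)
    (hU : rung (j + 1) e h + r + (0, 1) ∈ UFractal)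
    (hne : c n (rung (j + 1) e h + r + (0, 1)) ≠ none) : ∃ t, Escapes S c j e (h + 1) t := by
  rw [rung_add_above_top_row htop] at hU hne
  obtain ⟨hx, hx', -, -⟩ := hr.1
  have hfoot : (r.1, 0) ∈ bandCells (j + 1) e (h + 1) := ⟨⟨hx, hx', le_rfl, by positivity⟩, hU⟩
  exact exists_escapes_of_deep he hh hgrown hfoot (repunit_lt_of_mem_top_row he hr htop).le hne

theorem mk_three_pow_mem_exitZone (he : e = 1 ∨ e = -1) (hr : r ∈ bandCells (j + 1) e 1) :
    (r.1, 3 ^ (j + 1)) ∈ exitZone j e 0 := by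
  rw [exitZone, if_pos rfl]
  refine ⟨rfl, hr.1.1, ?_⟩
  by_contra! hdepth
  exact notMem_uFractal_of_repunit_lt he (Or.inl rfl) hr.1 hdepth hr.2

theorem exists_escapes_of_overhang (he : e = 1 ∨ e = -1)
    (hgrown : GrownFrom S c (rung (j + 1) e 0) (bandCells (j + 1) e 0) n)
    (hr : r ∈ bandCells (j + 1) e 1) (hbot : r.2 = 0)
    (hs : (r.1, 3 ^ (j + 1) - 1) ∈ bandCells (j + 1) e 0)
    (hu : CanAttach S (c n) (rung (j + 1) e 1 + r) u)
    (hne : c n (rung (j + 1) e 0 + (r.1, 3 ^ (j + 1) - 1)) ≠ none)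
    (hd : ∀ d ∈ directions, c n (rung (j + 1) e 1 + r + d) ≠ none → d = (0, -1)) :
    ∃ t, Escapes S c j e 0 t := by
  have hcell : rung (j + 1) e 1 + r = rung (j + 1) e 0 + (r.1, 3 ^ (j + 1)) := by
    ext <;> simp [rung, hbot]
  rw [hcell] at hu hd
  obtain ⟨t, hplaced, hsupports⟩ := hgrown.exists_supports_of_canAttach hs hne hu
    fun d hd' hne' => by
      rw [hd d hd' hne']
      exact Or.inr (by simpa [sub_eq_add_neg] using hs)
  exact ⟨t, he, ⟨le_rfl, by norm_num⟩, hplaced, _, mk_three_pow_mem_exitZone he hr, hsupports⟩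

theorem exists_escapes_of_contact_below_middle (he : e = 1 ∨ e = -1) (hj : 1 ≤ j)
    (hgrown : ∀ h ∈ Set.Icc (0 : ℤ) 2,
      GrownFrom S c (rung (j + 1) e h) (bandCells (j + 1) e h) n)
    (hconf : adom (c n) ⊆ UFractal) (hr : r ∈ bandCells (j + 1) e 1) (hbot : r.2 = 0)
    (hu : CanAttach S (c n) (rung (j + 1) e 1 + r) u)
    (hne : c n (rung (j + 1) e 1 + r + (0, -1)) ≠ none) : ∃ b t, Escapes S c j e b t := by
  have hs : (r.1, 3 ^ (j + 1) - 1) ∈ bandCells (j + 1) e 0 :=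
    mem_bandCells_below (h := 0) hr hbot (hconf hne)
  have hdeep : repunit j < -e * r.1 :=
    repunit_lt_of_mem_top_row (r := (r.1, 3 ^ (j + 1) - 1)) he hs rfl
  by_cases hside : ∃ d ∈ directions, r + d ∈ bandCells (j + 1) e 1 ∧
      c n (rung (j + 1) e 1 + r + d) ≠ none
  · obtain ⟨d, hd, hmem, hned⟩ := hside
    have hdeep' : repunit j ≤ -e * (r + d).1 := by
      linarith [Int.add_one_le_of_lt hdeep, depth_le_depth_add_one (r := r) he hd]
    rw [add_assoc] at hned
    exact ⟨1, exists_escapes_of_deep he (by norm_num) (hgrown 1 (by norm_num)) hmem hdeep' hned⟩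
  · push Not at hside
    have hne' := rung_add_below_bottom_row (h := 0) hbot ▸ hne
    refine ⟨0, exists_escapes_of_overhang he (hgrown 0 (by norm_num)) hr hbot hs hu hne' ?_⟩
    intro d hd hned
    rcases neighbor_of_mem_bandCells he (by norm_num) hr hd (hconf hned) with
      (hzero | hmem) | ⟨hh, -⟩ | ⟨-, htop, -⟩ | ⟨hdown, -⟩
    · have hpos : 0 < repunit j := repunit_strictMono hj
      have hdepth := depth_le_depth_add_one (r := r) he hd
      rw [hzero, Prod.fst_zero, mul_zero] at hdepth
      omega
    · exact absurd (hside d hd hmem) hned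
    · exact absurd hh one_ne_zero
    · omega
    · exact hdown

theorem mem_insert_bandCells_of_canAttach (he : e = 1 ∨ e = -1) (hj : 1 ≤ j)
    (hesc : ∀ b t, ¬ Escapes S c j e b t) (hconf : adom (c n) ⊆ UFractal)
    (hpivot : c n (pivot (j + 1)) ≠ none → c n (pivot (j + 1) + (e, 0)) ≠ none)
    (hgrown : ∀ h ∈ Set.Icc (0 : ℤ) 2,
      GrownFrom S c (rung (j + 1) e h) (bandCells (j + 1) e h) n)
    (hh : h ∈ Set.Icc (0 : ℤ) 2) (hr : r ∈ bandCells (j + 1) e h)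
    (hu : CanAttach S (c n) (rung (j + 1) e h + r) u) (hd : d ∈ directions)
    (hne : c n (rung (j + 1) e h + r + d) ≠ none) : r + d ∈ insert 0 (bandCells (j + 1) e h) := by
  rcases neighbor_of_mem_bandCells he hh hr hd (hconf hne) with
    hmem | ⟨rfl, hrd⟩ | ⟨rfl, htop, hh'⟩ | ⟨rfl, hbot, hh'⟩
  · exact hmem
  · rw [add_assoc, hrd, rung_add_eq_pivot] at hne
    have hempty := hu.2.1
    rw [rung_add_eq_pivot_add he hr.1 hd hrd] at hempty
    exact absurd hempty (hpivot hne)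
  · obtain ⟨t, ht⟩ := exists_escapes_of_contact_above he hh'
      (hgrown _ ⟨by linarith [hh'.1], hh'.2⟩) hr htop (hconf hne) hne
    exact absurd ht (hesc _ t)
  · obtain rfl | rfl : h = 1 ∨ h = 2 := by have := hh'.1; have := hh'.2; omega
    · obtain ⟨b, t, ht⟩ := exists_escapes_of_contact_below_middle he hj hgrown hconf hr hbot hu hne
      exact absurd ht (hesc b t)
    · have hs := mem_bandCells_below (h := 1) hr hbot (hconf hne)
      rw [show (2 : ℤ) = 1 + 1 from rfl, rung_add_below_bottom_row hbot] at hne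
      obtain ⟨t, ht⟩ := exists_escapes_of_deep he (by norm_num) (hgrown 1 (by norm_num)) hs
        (repunit_lt_of_mem_top_row he hs rfl).le hne
      exact absurd ht (hesc 1 t)

theorem grownFrom_rung_of_not_escapes (he : e = 1 ∨ e = -1) (hj : 1 ≤ j)
    (hesc : ∀ b t, ¬ Escapes S c j e b t) (hc : IsAssemblySeq S c) (hY : ConfinedTo S UFractal)
    (htemp : 0 < S.temp) (hseed : ∀ p : Pt, 3 ^ (j + 1) ≤ p.1 → S.seed p = none)
    (hpivot : ∀ n, c n (pivot (j + 1)) ≠ none → c n (pivot (j + 1) + (e, 0)) ≠ none) (n : ℕ) :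
    ∀ h ∈ Set.Icc (0 : ℤ) 2, GrownFrom S c (rung (j + 1) e h) (bandCells (j + 1) e h) n := by
  induction n with
  | zero =>
    refine fun h _ => Or.inl fun r hr => ?_
    rw [hc.zero]
    exact hseed _ (three_pow_le_rung_add_fst he hr.1)
  | succ n ih =>
    exact fun h hh => (ih h hh).succ hc htemp fun r hr u hu d hd hne =>
      mem_insert_bandCells_of_canAttach he hj hesc (hY _ (hc.reachable n)) (hpivot n) ih hh hr hu
        hd hne

theorem exists_side_of_pivot (hc : IsAssemblySeq S c) (hY : ConfinedTo S UFractal)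
    (htemp : 0 < S.temp) {k : ℕ} (hk : k ≠ 0) (hseed : S.seed (pivot k) = none)
    (hne : c n (pivot k) ≠ none) :
    ∃ e : ℤ, (e = 1 ∨ e = -1) ∧ ∀ m, c m (pivot k) ≠ none → c m (pivot k + (e, 0)) ≠ none := by
  obtain ⟨d, hd, hearlier⟩ := hc.exists_earlier_neighbor htemp hseed hne
  obtain ⟨e, he, rfl⟩ :=
    horizontal_of_pivot_add_mem hk hd (hY _ (hc.reachable n) (hearlier n hne))
  exact ⟨e, he, hearlier⟩

theorem exists_escapes (hc : IsAssemblySeq S c) (hY : ConfinedTo S UFractal)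
    (htemp : 0 < S.temp) (hcov : ∀ p ∈ UFractal, ∃ n, c n p ≠ none) (hj : 1 ≤ j)
    (hseed : ∀ p : Pt, 3 ^ (j + 1) ≤ p.1 → S.seed p = none) : ∃ e b t, Escapes S c j e b t := by
  have hpivot_fst : 3 ^ (j + 1) ≤ (pivot (j + 1)).1 := by
    simp only [pivot]
    linarith [three_pow_eq (j + 1), repunit_nonneg (j + 1)]
  obtain ⟨m, hm⟩ := hcov _ (pivot_mem_uFractal (j + 1))
  obtain ⟨e, he, hpivot⟩ := exists_side_of_pivot hc hY htemp j.succ_ne_zero (hseed _ hpivot_fst) hm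
  by_contra! hesc
  have hdeep := deep_mem_bandCells j.succ_ne_zero he
  obtain ⟨n, hn⟩ := hcov _ hdeep.2
  have hgrown := grownFrom_rung_of_not_escapes he hj (hesc e) hc hY htemp hseed hpivot n
  have hle : repunit j ≤ -e * (-e * repunit (j + 1)) := by
    have := (repunit_strictMono j.lt_succ_self).le
    rcases he with rfl | rfl <;> simpa
  obtain ⟨t, ht⟩ := exists_escapes_of_deep he (by norm_num) (hgrown 1 (by norm_num)) hdeep hle hn
  exact hesc e 1 t ht

end Escape

/-! ## Transplanting an escape to another scale -/

section Contradiction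

variable {S : TAS} {c : ℕ → Assembly} {i j : ℕ} {e b : ℤ} {t : TileType}

theorem Escapes.false_of_bottom (hc : IsAssemblySeq S c) (hY : ConfinedTo S UFractal)
    (hij : i < j) (hi : Escapes S c i e 0 t) (hj : Escapes S c j e 0 t) : False := by
  obtain ⟨z, hz, hsupports⟩ := hi.supports
  rw [exitZone, if_pos rfl] at hz
  obtain ⟨hheight, hpos, hdepth⟩ := hz
  refine notMem_uFractal_of_overhang (Nat.succ_lt_succ hij) hi.side hpos hdepth hheight
    (hj.placed.add_mem_of_supports hc hY (fun r hr hU => ⟨?_, hU⟩) hsupports)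
  have hpow : (3 : ℤ) ^ (i + 1) < 3 ^ (j + 1) := pow_lt_pow_right₀ (by norm_num) (by omega)
  obtain ⟨⟨hx, hx', hy, hy'⟩, -⟩ := hr
  exact ⟨hx, hx'.trans hpow, hy, hy'.trans hpow⟩

theorem exit_cases {k : ℕ} {z d : Pt} (he : e = 1 ∨ e = -1) (hd : d ∈ directions)
    (hdepth : -e * (z + d).1 ≤ repunit k) (hheight : (z + d).2 < 3 ^ k)
    (hz : ¬ (-e * z.1 ≤ repunit k ∧ z.2 < 3 ^ k)) :
    (-e * z.1 = repunit k + 1 ∧ z.2 < 3 ^ k) ∨ (-e * z.1 ≤ repunit k ∧ z.2 = 3 ^ k) := by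
  rcases add_direction_cases (r := z) he hd with ⟨hle, heq⟩ | ⟨heq, hle⟩ <;> omega

theorem Escapes.false_of_ne_zero (hc : IsAssemblySeq S c) (hY : ConfinedTo S UFractal)
    (htemp : 0 < S.temp) (hb : b ≠ 0) (hij : i + 1 < j) (hi : Escapes S c i e b t)
    (hj : Escapes S c j e b t) : False := by
  obtain ⟨z, hz, hsupports⟩ := hj.supports
  rw [exitZone, if_neg hb] at hz
  let B : Set Pt := {r | -e * r.1 ≤ repunit (i + 1) ∧ r.2 < 3 ^ (i + 1)}
  have hzB : z ∉ B := fun hzB => (repunit_strictMono hij).not_ge (hz.2.trans hzB.1)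
  obtain ⟨y, ⟨hy, hyB⟩, hexit⟩ := hsupports.exists_exit ⟨hz.1, hzB⟩
  have hpow := three_pow_eq (i + 1)
  have hpos : 0 < repunit (i + 1) := repunit_strictMono i.succ_pos
  have hyU : rung (i + 1) e b + y ∈ UFractal := by
    refine hi.placed.add_mem_of_supports hc hY (fun r hr hU => ⟨?_, hU⟩) hexit
    obtain ⟨⟨⟨hx, -, hy, -⟩, -⟩, hdepth, hheight⟩ := hr
    exact ⟨hx, by linarith, hy, hheight⟩
  obtain ⟨d, hd, hyd⟩ := hexit.exists_neighbor htemp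
  have hydB : y + d ∈ B := by
    rcases hyd with hzero | hyd
    · rw [hzero]
      exact ⟨by simpa using hpos.le, by simp⟩
    · exact hyd.2
  rcases exit_cases hi.side hd hydB.1 hydB.2 hyB with ⟨hdepth, hheight⟩ | ⟨hdepth, hheight⟩
  · have hb' : b = 1 ∨ b = 2 := by have := hi.band_mem.1; have := hi.band_mem.2; omega
    exact notMem_uFractal_of_repunit_lt hi.side hb'
      ⟨hy.1.1, by linarith, hy.1.2.2.1, hheight⟩ (by linarith) hyU
  · exact notMem_uFractal_of_overhang (by omega) hi.side hy.1.1 hdepth hheight hy.2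

theorem Escapes.not_of_lt (hc : IsAssemblySeq S c) (hY : ConfinedTo S UFractal)
    (htemp : 0 < S.temp) (hij : i + 1 < j) (hi : Escapes S c i e b t) : ¬ Escapes S c j e b t := by
  intro hj
  rcases eq_or_ne b 0 with rfl | hb
  · exact hi.false_of_bottom hc hY (by omega) hj
  · exact hi.false_of_ne_zero hc hY htemp hb hij hj

end Contradiction

theorem ConfinedTo.false_of_exists_escapes {S : TAS} {c : ℕ → Assembly} {j₀ : ℕ}
    (hY : ConfinedTo S UFractal) (hc : IsAssemblySeq S c) (htemp : 0 < S.temp)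
    (hesc : ∀ j ≥ j₀, ∃ e b t, Escapes S c j e b t) : False := by
  choose e b t hesc using fun i => hesc (j₀ + 2 * i) (Nat.le_add_right _ _)
  let kinds : Set (ℤ × ℤ × TileType) := {1, -1} ×ˢ Set.Icc 0 2 ×ˢ S.tiles
  have hkinds : kinds.Finite :=
    (Set.toFinite _).prod ((Set.finite_Icc _ _).prod S.tiles.finite_toSet)
  have hmem : ∀ i, (e i, b i, t i) ∈ kinds := fun i =>
    ⟨(hesc i).side, (hesc i).band_mem, (hesc i).placed.mem_tiles hc⟩
  obtain ⟨i, i', hlt, heq⟩ := hkinds.exists_lt_map_eq_of_forall_mem hmem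
  obtain ⟨he, hb, ht⟩ : e i = e i' ∧ b i = b i' ∧ t i = t i' := by simpa using heq
  have hi := hesc i
  rw [he, hb, ht] at hi
  exact hi.not_of_lt hc hY htemp (by omega) (hesc i')

theorem exists_seed_eq_none_of_three_pow_le (S : TAS) :
    ∃ j₀ : ℕ, ∀ p : Pt, 3 ^ j₀ ≤ p.1 → S.seed p = none := by
  obtain ⟨x, hx⟩ := (S.seed_finite.image Prod.fst).bddAbove
  refine ⟨x.toNat, fun p hp => ?_⟩
  by_contra hne
  linarith [hx (Set.mem_image_of_mem Prod.fst hne), lt_three_pow_toNat x]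

theorem FinitelySelfAssembles.exists_isAssemblySeq {S : TAS} {X : Set Pt}
    (h : FinitelySelfAssembles S X) :
    ∃ c, IsAssemblySeq S c ∧ ∀ p ∈ X, ∃ n, c n p ≠ none := by
  obtain ⟨β, ⟨c, hzero, hsucc, -, hcov⟩, rfl⟩ :=
    h S.seed (reachesFrom_of_reflTransGen Relation.ReflTransGen.refl) S.seed_finite
  refine ⟨c, ⟨hzero, hsucc⟩, fun p hp => ?_⟩
  obtain ⟨t, ht⟩ := Option.ne_none_iff_exists'.1 hp
  obtain ⟨n, hn⟩ := hcov p t ht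
  exact ⟨n, by simp [hn]⟩

theorem uFractal_ne_univ : UFractal ≠ Set.univ := by
  intro h
  have hmem : ((-1, 0) : Pt) ∈ UFractal := h ▸ Set.mem_univ _
  exact absurd ((mem_uFractal_iff _).1 hmem).1 (by norm_num)

/-- No aTAM tile assembly system finitely self-assembles the
U fractal `𝐔`. -/
theorem uFractal_not_finitelySelfAssembles :
    ∀ S : TAS, ¬ FinitelySelfAssembles S UFractal := by
  intro S hS
  have hY : ConfinedTo S UFractal := hS.confinedTo
  obtain ⟨c, hc, hcov⟩ := hS.exists_isAssemblySeq
  have htemp : 0 < S.temp := by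
    obtain ⟨n, hn⟩ := hcov _ (mk_zero_mem_uFractal le_rfl)
    obtain ⟨t, ht⟩ := Option.ne_none_iff_exists'.1 hn
    exact hY.temp_pos uFractal_ne_univ ⟨t, (hc.reachable n).mem_tiles ht⟩
  obtain ⟨j₀, hseed⟩ := exists_seed_eq_none_of_three_pow_le S
  refine hY.false_of_exists_escapes (j₀ := j₀ + 1) hc htemp fun j hj => ?_
  refine exists_escapes hc hY htemp hcov (by omega) fun p hp => hseed p (le_trans ?_ hp)
  exact pow_le_pow_right₀ (by norm_num) (by omega)
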